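/- arXiv:0801.3157 — 2 statements merged into one kernel-verified Lean document; each statement's English description precedes it below -/
import Mathlib

section
/- Let θ ∈ (0,1) be the unique solution of 3(1−θ)²(√6 + 1/3)/(2(2θ+1)) = 4, let γ ≥ 1 be real, and set μ = (√6 + 1/3)·γ. Let n ≥ 2 be an integer and F ≥ 0 a real number with n·F ≤ θ·μ·ln(n), and assume (1−θ)·μ·ln(n) ≥ 2. If X is a random variable with the Poisson distribution of parameter n·F, then P( X ≥ n·F + (1−θ)·μ·ln(n) ) ≤ F·n^{−γ}. -/
open MeasureTheory ProbabilityTheory Real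

/-!
The mass of a Poisson law of parameter `m` on `[k, ∞)` is at most `m ^ k / k!`. One factor `m` is
kept, and the other `k - 1` are bounded by a small multiple of `k`; since `k ^ k / k! ≤ exp k`, the
tail beyond `x > 1` is at most `m * exp (-x)` as soon as `m ≤ exp (-4) * x`. For `m = n * F` and
`x = m + (1 - θ) * μ * log n`, the constraint `m ≤ θ * μ * log n` gives `m ≤ θ * x`. It then remains
that `θ ≤ exp (-4)` and `x ≥ (1 + γ) * log n`: the factor `n` in `m` is absorbed by `exp (-log n)`.
-/

section PoissonTail

variable (r : NNReal)

theorem poissonMeasure_singleton_add_le (k j : ℕ) :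
    poissonMeasure r {k + j} ≤
      ENNReal.ofReal ((r : ℝ) ^ k / k.factorial) * poissonMeasure r {j} := by
  rw [poissonMeasure_singleton, poissonMeasure_singleton, ← ENNReal.ofReal_mul (by positivity)]
  apply ENNReal.ofReal_le_ofReal
  have hfactorial : (k.factorial : ℝ) * j.factorial ≤ (k + j).factorial := by
    exact_mod_cast Nat.le_of_dvd (Nat.factorial_pos _)
      (Nat.factorial_mul_factorial_dvd_factorial_add k j)
  calc exp (-r) * (r : ℝ) ^ (k + j) / (k + j).factorial
      ≤ exp (-r) * (r : ℝ) ^ (k + j) / ((k.factorial : ℝ) * j.factorial) := by gcongr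
    _ = (r : ℝ) ^ k / k.factorial * (exp (-r) * (r : ℝ) ^ j / j.factorial) := by
      rw [pow_add]
      field_simp

theorem poissonMeasure_Ici_le (k : ℕ) :
    poissonMeasure r (Set.Ici k) ≤ ENNReal.ofReal ((r : ℝ) ^ k / k.factorial) := by
  have hcover : Set.Ici k ⊆ ⋃ j : ℕ, {k + j} := fun i hi ↦
    Set.mem_iUnion.mpr (Nat.exists_eq_add_of_le hi)
  have htotal : ∑' j : ℕ, poissonMeasure r {j} = 1 := by
    simpa using (poissonMeasure r).tsum_indicator_apply_singleton Set.univ .univ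
  calc poissonMeasure r (Set.Ici k)
      ≤ ∑' j : ℕ, poissonMeasure r {k + j} := (measure_mono hcover).trans (measure_iUnion_le _)
    _ ≤ ∑' j : ℕ, ENNReal.ofReal ((r : ℝ) ^ k / k.factorial) * poissonMeasure r {j} :=
      ENNReal.tsum_le_tsum fun j ↦ poissonMeasure_singleton_add_le r k j
    _ = ENNReal.ofReal ((r : ℝ) ^ k / k.factorial) := by rw [ENNReal.tsum_mul_left, htotal, mul_one]

theorem pow_div_factorial_le_mul_exp_neg {m s : ℝ} {k : ℕ} (hm : 0 ≤ m) (hs : -1 ≤ s)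
    (hk : 2 ≤ k) (hmk : m ≤ exp (-(2 * (1 + s))) * k) :
    m ^ k / k.factorial ≤ m * exp (-(s * k)) := by
  obtain ⟨i, rfl⟩ : ∃ i, k = i + 1 := ⟨k - 1, by lia⟩
  set k := i + 1
  have hk1 : (1 : ℝ) ≤ k := by exact_mod_cast (by lia : 1 ≤ k)
  -- The factor 2 in `hmk` makes up for the missing power of `m`, since `k ≤ 2 * (k - 1)`.
  have hexponent : (1 + s) * k ≤ i * (2 * (1 + s)) := by
    have hki : (k : ℝ) ≤ 2 * i := by exact_mod_cast (by lia : k ≤ 2 * i)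
    nlinarith
  have hpow : m ^ i ≤ exp (-((1 + s) * k)) * (k : ℝ) ^ k := by
    calc m ^ i ≤ (exp (-(2 * (1 + s))) * k) ^ i := by gcongr
      _ = exp (-(i * (2 * (1 + s)))) * (k : ℝ) ^ i := by
        rw [mul_pow, ← exp_nat_mul, mul_neg]
      _ ≤ exp (-((1 + s) * k)) * (k : ℝ) ^ k := by
        gcongr
        exact Nat.le_succ i
  calc m ^ k / k.factorial = m * (m ^ i / k.factorial) := by rw [pow_succ', mul_div_assoc]
    _ ≤ m * (exp (-((1 + s) * k)) * (k : ℝ) ^ k / k.factorial) := by gcongr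
    _ ≤ m * (exp (-((1 + s) * k)) * exp k) := by
      rw [mul_div_assoc]
      gcongr
      exact pow_div_factorial_le_exp k k.cast_nonneg k
    _ = m * exp (-(s * k)) := by
      rw [← exp_add]
      ring_nf

theorem poissonMeasure_le_mul_exp_neg {x s : ℝ} (hs : 0 ≤ s) (hx : 1 < x)
    (hr : (r : ℝ) ≤ exp (-(2 * (1 + s))) * x) :
    poissonMeasure r {k | x ≤ (k : ℝ)} ≤ ENNReal.ofReal (r * exp (-(s * x))) := by
  have hxk : x ≤ ⌈x⌉₊ := Nat.le_ceil x
  have hset : {k : ℕ | x ≤ (k : ℝ)} = Set.Ici ⌈x⌉₊ := by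
    ext k
    simp only [Set.mem_ofPred_eq, Set.mem_Ici, Nat.ceil_le]
  rw [hset]
  refine (poissonMeasure_Ici_le r _).trans (ENNReal.ofReal_le_ofReal ?_)
  calc (r : ℝ) ^ ⌈x⌉₊ / (⌈x⌉₊).factorial
      ≤ r * exp (-(s * ⌈x⌉₊)) :=
        pow_div_factorial_le_mul_exp_neg r.coe_nonneg (by linarith)
          (Nat.lt_ceil.mpr (by exact_mod_cast hx)) (hr.trans (by gcongr))
    _ ≤ r * exp (-(s * x)) := by gcongr

end PoissonTail

theorem one_div_sixty_four_le_exp_neg_four : (1 / 64 : ℝ) ≤ exp (-4) := by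
  rw [exp_neg, one_div]
  apply inv_anti₀ (exp_pos _)
  calc exp 4 = exp 1 ^ 4 := by rw [← exp_nat_mul]; norm_num
    _ ≤ 2.7182818286 ^ 4 := by gcongr; exact exp_one_lt_d9.le
    _ ≤ 64 := by norm_num

section Parameters

variable {θ : ℝ}

theorem theta_le_one_div_sixty_four (hθ : θ ≤ 1)
    (hθeq : 3 * (1 - θ) ^ 2 * (√6 + 1 / 3) / (2 * (2 * θ + 1)) = 4) : θ ≤ 1 / 64 := by
  by_contra! hlt
  have hsqrt : √6 ≤ 5 / 2 := sqrt_le_iff.mpr (by norm_num)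
  rw [div_eq_iff (by positivity)] at hθeq
  nlinarith [mul_le_mul_of_nonneg_left hsqrt (sq_nonneg (1 - θ))]

theorem one_add_le_one_sub_theta_mul {γ : ℝ} (hθ : θ ≤ 1 / 64) (hγ : 1 ≤ γ) :
    1 + γ ≤ (1 - θ) * ((√6 + 1 / 3) * γ) := by
  have hsqrt : 2 ≤ √6 := le_sqrt_of_sq_le (by norm_num)
  have htwo : 2 ≤ (1 - θ) * (√6 + 1 / 3) := by nlinarith
  nlinarith

end Parameters

theorem mul_mul_exp_neg_one_add_mul_log {n : ℝ} (hn : 0 < n) (F γ : ℝ) :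
    n * F * exp (-((1 + γ) * log n)) = F * n ^ (-γ) := by
  rw [rpow_def_of_pos hn, show -((1 + γ) * log n) = -log n + log n * -γ by ring, exp_add, exp_neg,
    exp_log hn]
  field_simp

theorem statement_14_general {θ γ μ n F : ℝ} (hθ : θ ≤ exp (-4)) (hγ : 1 / 2 ≤ γ)
    (hμ : 1 + γ ≤ (1 - θ) * μ) (hn : 2 ≤ n) (hF : 0 ≤ F) (hnF : n * F ≤ θ * μ * log n)
    {Ω : Type*} {mΩ : MeasurableSpace Ω} {P : Measure Ω} {X : Ω → ℕ}
    (hX : HasLaw X (poissonMeasure (n * F).toNNReal) P) :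
    P {ω | n * F + (1 - θ) * μ * log n ≤ (X ω : ℝ)} ≤ ENNReal.ofReal (F * n ^ (-γ)) := by
  have hm : 0 ≤ n * F := by positivity
  have hlog : 0 ≤ log n := log_nonneg (by linarith)
  set x := n * F + (1 - θ) * μ * log n
  have hlogx : (1 + γ) * log n ≤ x :=
    (mul_le_mul_of_nonneg_right hμ hlog).trans (le_add_of_nonneg_left hm)
  have hx : 1 < x := calc
    1 < (1 + 1 / 2) * log 2 := by linarith [log_two_gt_d9]
    _ ≤ (1 + γ) * log n := by gcongr
    _ ≤ x := hlogx
  have hθ1 : θ ≤ 1 := hθ.trans (exp_le_one_iff.mpr (by norm_num))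
  have hmx : n * F ≤ exp (-4) * x := calc
    n * F = θ * (n * F) + (1 - θ) * (n * F) := by ring
    _ ≤ θ * (n * F) + (1 - θ) * (θ * μ * log n) := by gcongr
    _ = θ * x := by ring
    _ ≤ exp (-4) * x := by gcongr
  rw [hX.measure_eq (p := fun k ↦ x ≤ (k : ℝ)) .of_discrete]
  refine (poissonMeasure_le_mul_exp_neg _ zero_le_one hx ?_).trans (ENNReal.ofReal_le_ofReal ?_)
  · rw [coe_toNNReal _ hm]
    norm_num [hmx]
  · rw [coe_toNNReal _ hm, one_mul, ← mul_mul_exp_neg_one_add_mul_log (by positivity)]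
    gcongr

/-- a Poisson deviation bound (Lemma on "large deviation, small mass"). -/
theorem statement_14
    (θ : ℝ) (hθ : θ ∈ Set.Ioo (0:ℝ) 1)
    (hθeq : 3 * (1 - θ) ^ 2 * (Real.sqrt 6 + 1/3) / (2 * (2 * θ + 1)) = 4)
    (γ : ℝ) (hγ : 1 ≤ γ)
    (μ : ℝ) (hμ : μ = (Real.sqrt 6 + 1/3) * γ)
    (n : ℕ) (hn : 2 ≤ n) (F : ℝ) (hF : 0 ≤ F)
    (hnF : (n : ℝ) * F ≤ θ * μ * Real.log n)
    (hbig : 2 ≤ (1 - θ) * μ * Real.log n)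
    {Ω : Type} [MeasurableSpace Ω] (P : Measure Ω) [IsProbabilityMeasure P]
    (X : Ω → ℕ) (hX : Measurable X)
    (hpois : P.map X = ProbabilityTheory.poissonMeasure (Real.toNNReal ((n : ℝ) * F))) :
    P {ω | (n : ℝ) * F + (1 - θ) * μ * Real.log n ≤ (X ω : ℝ)}
      ≤ ENNReal.ofReal (F * (n : ℝ) ^ (-γ)) := by
  have hθ64 : θ ≤ 1 / 64 := theta_le_one_div_sixty_four hθ.2.le hθeq
  exact statement_14_general (hθ64.trans one_div_sixty_four_le_exp_neg_four) (by linarith)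
    (hμ ▸ one_add_le_one_sub_theta_mul hθ64 hγ) (by exact_mod_cast hn) hF hnF
    ⟨hX.aemeasurable, hpois⟩
end

section
/- Let n ≥ 2 be an integer, γ > 0, and let V̂ ≥ 0 and w ≥ 0 be real numbers. Set Ṽ = V̂ + √(2γ·ln(n)·V̂·w²/n²) + 3γ·ln(n)·w²/n² and η = √(2γ·ln(n)·Ṽ) + γ·ln(n)·w/(3n). Then for every θ > 0, with c₁ = √(1 + 1/(2θ)) and c₂ = 3·√(2θ+6) + 1: √(2γ·ln(n)·V̂) + γ·ln(n)·w/(3n) ≤ η ≤ c₁·√(2γ·ln(n)·V̂) + c₂·γ·ln(n)·w/(3n). -/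
open Real

/-! With `a = √(2xV)` and `b = xw/n`, where `x` stands for `γ ln n`, the inflated variance `Ṽ`
satisfies `2xṼ = a² + 2ab + 6b²`. Young's inequality with weight `2θ` absorbs the cross term into
the two squares, and subadditivity of the square root separates them. -/

lemma sqrt_add_le_sqrt_add_sqrt (a b : ℝ) : √(a + b) ≤ √a + √b := by
  have ha : a ≤ √a ^ 2 := (sqrt_le_iff.mp le_rfl).2
  have hb : b ≤ √b ^ 2 := (sqrt_le_iff.mp le_rfl).2
  have cross : 0 ≤ 2 * √a * √b := by positivity
  refine sqrt_le_iff.mpr ⟨by positivity, ?_⟩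
  rw [add_sq]
  linarith

lemma sqrt_sq_add_two_mul_add_mul_sq_le {a b ε : ℝ} (c : ℝ) (ha : 0 ≤ a) (hb : 0 ≤ b)
    (hε : 0 < ε) :
    √(a ^ 2 + 2 * a * b + c * b ^ 2) ≤ √(1 + 1 / ε) * a + √(ε + c) * b := by
  have young : 2 * a * b ≤ ε⁻¹ * a ^ 2 + ε * b ^ 2 := by
    simpa only [inv_inv] using two_mul_le_add_mul_sq (a := a) (b := b) (inv_pos.mpr hε)
  calc √(a ^ 2 + 2 * a * b + c * b ^ 2)
      ≤ √((1 + 1 / ε) * a ^ 2 + (ε + c) * b ^ 2) := sqrt_le_sqrt (by rw [one_div]; linarith)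
    _ ≤ √((1 + 1 / ε) * a ^ 2) + √((ε + c) * b ^ 2) := sqrt_add_le_sqrt_add_sqrt ..
    _ = √(1 + 1 / ε) * a + √(ε + c) * b := by
      rw [sqrt_mul' _ (sq_nonneg a), sqrt_mul' _ (sq_nonneg b), sqrt_sq ha, sqrt_sq hb]

/-- The inflated variance `Ṽ` that corrects the empirical variance `V` of a function of sup-norm `w`
over `n` observations. An arbitrary level `x` takes the place of `γ ln n`, and `n` is real. -/
noncomputable def inflatedVariance (n x V w : ℝ) : ℝ :=
  V + √(2 * x * V * w ^ 2 / n ^ 2) + 3 * x * w ^ 2 / n ^ 2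

/-- The random threshold `η` of the thresholding estimator, at level `x` in place of `γ ln n`. -/
noncomputable def randomThreshold (n x V w : ℝ) : ℝ :=
  √(2 * x * inflatedVariance n x V w) + x * w / (3 * n)

section

variable {n x V w : ℝ}

lemma le_inflatedVariance (hx : 0 ≤ x) : V ≤ inflatedVariance n x V w := by
  rw [inflatedVariance, add_assoc]
  exact le_add_of_nonneg_right (by positivity)

lemma two_mul_mul_inflatedVariance (hn : 0 < n) (hx : 0 ≤ x) (hV : 0 ≤ V) (hw : 0 ≤ w) :
    2 * x * inflatedVariance n x V w
      = √(2 * x * V) ^ 2 + 2 * √(2 * x * V) * (x * w / n) + 6 * (x * w / n) ^ 2 := by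
  have sqrt_cross : √(2 * x * V * w ^ 2 / n ^ 2) = √(2 * x * V) * (w / n) := by
    rw [mul_div_assoc, ← div_pow, sqrt_mul' _ (sq_nonneg _), sqrt_sq (by positivity)]
  rw [inflatedVariance, sqrt_cross, sq_sqrt (by positivity)]
  ring

lemma le_randomThreshold (hx : 0 ≤ x) :
    √(2 * x * V) + x * w / (3 * n) ≤ randomThreshold n x V w := by
  unfold randomThreshold
  gcongr
  exact le_inflatedVariance hx

lemma randomThreshold_le (hn : 0 < n) (hx : 0 ≤ x) (hV : 0 ≤ V) (hw : 0 ≤ w) {θ : ℝ}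
    (hθ : 0 < θ) :
    randomThreshold n x V w ≤ √(1 + 1 / (2 * θ)) * √(2 * x * V)
      + (3 * √(2 * θ + 6) + 1) * (x * w / (3 * n)) := by
  have hb : 0 ≤ x * w / n := by positivity
  calc randomThreshold n x V w
      ≤ √(1 + 1 / (2 * θ)) * √(2 * x * V) + √(2 * θ + 6) * (x * w / n) + x * w / (3 * n) := by
        rw [randomThreshold, two_mul_mul_inflatedVariance hn hx hV hw]
        gcongr
        exact sqrt_sq_add_two_mul_add_mul_sq_le 6 (sqrt_nonneg _) hb (by positivity)
    _ = √(1 + 1 / (2 * θ)) * √(2 * x * V)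
        + (3 * √(2 * θ + 6) + 1) * (x * w / (3 * n)) := by ring

theorem statement_16_general (hn : 0 < n) (hx : 0 ≤ x) (hV : 0 ≤ V) (hw : 0 ≤ w) {θ : ℝ}
    (hθ : 0 < θ) :
    √(2 * x * V) + x * w / (3 * n) ≤ randomThreshold n x V w ∧
      randomThreshold n x V w ≤ √(1 + 1 / (2 * θ)) * √(2 * x * V)
        + (3 * √(2 * θ + 6) + 1) * (x * w / (3 * n)) :=
  ⟨le_randomThreshold hx, randomThreshold_le hn hx hV hw hθ⟩

end

/-- deterministic upper and lower bounds for the random threshold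
`η = √(2γ ln n Ṽ) + γ ln n w/(3n)` where `Ṽ = V̂ + √(2γ ln n V̂ w²/n²) + 3γ ln n w²/n²`. -/
theorem statement_16
    (n : ℕ) (hn : 2 ≤ n) (γ : ℝ) (hγ : 0 < γ)
    (Vh w : ℝ) (hV : 0 ≤ Vh) (hw : 0 ≤ w)
    (Vt η : ℝ)
    (hVt : Vt = Vh + Real.sqrt (2 * γ * Real.log n * Vh * w ^ 2 / (n : ℝ) ^ 2)
        + 3 * γ * Real.log n * w ^ 2 / (n : ℝ) ^ 2)
    (hη : η = Real.sqrt (2 * γ * Real.log n * Vt) + γ * Real.log n * w / (3 * n))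
    (θ : ℝ) (hθ : 0 < θ) :
    Real.sqrt (2 * γ * Real.log n * Vh) + γ * Real.log n * w / (3 * n) ≤ η ∧
    η ≤ Real.sqrt (1 + 1 / (2 * θ)) * Real.sqrt (2 * γ * Real.log n * Vh)
        + (3 * Real.sqrt (2 * θ + 6) + 1) * (γ * Real.log n * w / (3 * n)) := by
  subst hη hVt
  simpa only [randomThreshold, inflatedVariance, ← mul_assoc] using
    statement_16_general (Nat.cast_pos.mpr (by lia))
      (mul_nonneg hγ.le (log_natCast_nonneg n)) hV hw hθ
end
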